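/- arXiv:1211.0475 — 2 statements merged into one kernel-verified Lean document; each statement's English description precedes it below -/
import Mathlib

section
/- Let 𝒳 ⊆ L⁰₊ be convex, solid and bounded in probability. Then there exists a probability measure Q ~ P such that 𝒳 is uniformly Q-integrable if and only if ⋂ₙ conv{(X − n)₊ : X ∈ 𝒳} = {0}, i.e. the only Y ∈ L⁰₊ belonging to conv{(X − n)₊ : X ∈ 𝒳} for every n ∈ ℕ is Y = 0 a.e. -/
open MeasureTheory Filter Topology

/-- `L⁰₊`: (representatives of) measurable functions that are nonnegative `P`-a.s. -/
def L0pos {Ω : Type*} [MeasurableSpace Ω] (P : Measure Ω) : Set (Ω → ℝ) :=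
  {X | Measurable X ∧ ∀ᵐ ω ∂P, 0 ≤ X ω}

/-- A set `S ⊆ L⁰₊` is solid if `X ∈ S`, `Y ∈ L⁰₊` and `Y ≤ X` a.e. imply `Y ∈ S`. -/
def Solid {Ω : Type*} [MeasurableSpace Ω] (P : Measure Ω) (S : Set (Ω → ℝ)) : Prop :=
  ∀ X ∈ S, ∀ Y ∈ L0pos P, (∀ᵐ ω ∂P, Y ω ≤ X ω) → Y ∈ S

/-- `𝒳` is uniformly `Q`-integrable:  `sup_{X ∈ 𝒳} E_Q[X 1_{X > n}] → 0`. -/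
def UnifInt {Ω : Type*} [MeasurableSpace Ω] (Q : Measure Ω) (𝒳 : Set (Ω → ℝ)) : Prop :=
  Tendsto (fun n : ℕ => ⨆ X ∈ 𝒳, ∫⁻ ω in {ω | (n : ℝ) < X ω}, ENNReal.ofReal (X ω) ∂Q)
    atTop (𝓝 0)


lemma inv_int {Ω : Type*} [MeasurableSpace Ω] (P : Measure Ω) [IsProbabilityMeasure P]
    (f : Ω → ℝ) (hf : Measurable f) (h0 : ∀ ω, 0 ≤ f ω) : Integrable (fun ω => 1 / (1 + f ω)) P := by
  refine Integrable.of_bound (C := 1)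
    (Measurable.aestronglyMeasurable (by fun_prop)) (ae_of_all _ fun ω => ?_)
  have := h0 ω
  rw [Real.norm_of_nonneg (by positivity), div_le_one (by linarith)]
  linarith

lemma gap_ineq (a b : ℝ) (ha : 0 ≤ a) (hb : 0 ≤ b) :
    (1 / (1 + a) - 1 / (1 + b)) ^ 2 ≤
      4 * ((1 / (1 + a) + 1 / (1 + b)) / 2 - 1 / (1 + (1/2 * a + 1/2 * b))) := by
  have e : 4 * ((1 / (1 + a) + 1 / (1 + b)) / 2 - 1 / (1 + (1/2 * a + 1/2 * b)))
      = (a - b) ^ 2 * (2 / ((1 + a) * (1 + b) * (2 + a + b))) := by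
    field_simp
    ring
  have e2 : (1 / (1 + a) - 1 / (1 + b)) ^ 2 = (a - b) ^ 2 * (1 / ((1 + a) ^ 2 * (1 + b) ^ 2)) := by
    field_simp
    ring
  rw [e, e2]
  gcongr ?_ * ?_
  rw [div_le_div_iff₀ (by positivity) (by positivity)]
  have : 0 ≤ a * b := by positivity
  nlinarith [mul_nonneg this (by positivity : (0:ℝ) ≤ (1 + a) * (1 + b)), mul_nonneg ha hb,
    mul_nonneg (add_nonneg ha hb) (by positivity : (0:ℝ) ≤ (1 + a) * (1 + b)),
    (by positivity : (0:ℝ) ≤ (1 + a) * (1 + b))]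

/-- Komlos-type selection along a decreasing sequence of convex sets. -/
lemma sel {Ω : Type*} [MeasurableSpace Ω] (P : Measure Ω) [IsProbabilityMeasure P]
    (C : ℕ → Set (Ω → ℝ)) (hm : ∀ n, ∀ f ∈ C n, Measurable f ∧ ∀ ω, 0 ≤ f ω)
    (hanti : Antitone C) (hconv : ∀ n, Convex ℝ (C n)) (hne : ∀ n, (C n).Nonempty)
    (hb : ∀ δ : ℝ, 0 < δ → ∃ c : ℝ, ∀ f ∈ C 0, P {ω | c < f ω} ≤ ENNReal.ofReal δ) :
    ∃ (φ : ℕ → ℕ) (h : ℕ → Ω → ℝ) (g : Ω → ℝ), (∀ k, k ≤ φ k) ∧ (∀ k, h k ∈ C (φ k)) ∧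
      (∀ k, ∀ f ∈ C (φ k), ∫ ω, 1 / (1 + h k ω) ∂P ≤ ∫ ω, 1 / (1 + f ω) ∂P + (1/8) ^ k) ∧
      Measurable g ∧ (∀ ω, 0 ≤ g ω) ∧ ∀ᵐ ω ∂P, Tendsto (fun k => h k ω) atTop (𝓝 (g ω)) := by
  set F : (Ω → ℝ) → ℝ := fun f => ∫ ω, 1 / (1 + f ω) ∂P with hF
  have Fnn : ∀ n, ∀ f ∈ C n, 0 ≤ F f := fun n f hf => integral_nonneg fun ω => by
    have := (hm n f hf).2 ω
    positivity
  have Fle : ∀ n, ∀ f ∈ C n, F f ≤ 1 := fun n f hf => by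
    have : F f ≤ ∫ ω, (1:ℝ) ∂P := by
      apply integral_mono (inv_int P f (hm n f hf).1 (hm n f hf).2) (integrable_const _)
      intro ω
      have := (hm n f hf).2 ω
      simp only
      rw [div_le_one (by linarith)]
      linarith
    simpa using this
  have bdd : ∀ n, BddBelow (F '' C n) := fun n => ⟨0, by rintro _ ⟨f, hf, rfl⟩; exact Fnn n f hf⟩
  set I : ℕ → ℝ := fun n => sInf (F '' C n) with hI
  have Imono : Monotone I := fun a b hab =>
    csInf_le_csInf (bdd a) ((hne b).image F) (Set.image_mono (hanti hab))
  have Ile : ∀ n, I n ≤ 1 := fun n => by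
    obtain ⟨f, hf⟩ := hne n
    exact (csInf_le (bdd n) ⟨f, hf, rfl⟩).trans (Fle n f hf)
  have Ibdd : BddAbove (Set.range I) := ⟨1, by rintro _ ⟨n, rfl⟩; exact Ile n⟩
  have Ilim := tendsto_atTop_ciSup Imono Ibdd
  set S := ⨆ n, I n with hS
  have exφ : ∀ k : ℕ, ∃ n, k ≤ n ∧ S - (1/8) ^ k < I n := fun k => by
    have h1 : ∀ᶠ n in atTop, S - (1/8) ^ k < I n :=
      Ilim.eventually (lt_mem_nhds (by linarith [pow_pos (by norm_num : (0:ℝ) < 1/8) k]))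
    obtain ⟨n, h1, h2⟩ := ((eventually_ge_atTop k).and h1).exists
    exact ⟨n, h1, h2⟩
  choose φ0 hφ0 hφ0S using exφ
  -- make it monotone
  set φ : ℕ → ℕ := fun k => (Finset.range (k+1)).sup φ0 with hφdef
  have φge : ∀ k, φ0 k ≤ φ k := fun k => Finset.le_sup (f := φ0) (by simp)
  have φmono : Monotone φ := fun a b hab => Finset.sup_mono (by
    intro x hx; simp only [Finset.mem_range] at *; omega)
  have hφ : ∀ k, k ≤ φ k := fun k => (hφ0 k).trans (φge k)
  have hφS : ∀ k, S - (1/8) ^ k < I (φ k) := fun k => (hφ0S k).trans_le (Imono (φge k))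
  have exh : ∀ k : ℕ, ∃ f ∈ C (φ k), F f < I (φ k) + (1/8) ^ k := fun k => by
    obtain ⟨_, ⟨f, hf, rfl⟩, h2⟩ := exists_lt_of_csInf_lt ((hne (φ k)).image F)
      (show sInf (F '' C (φ k)) < I (φ k) + (1/8) ^ k by
        linarith [pow_pos (by norm_num : (0:ℝ) < 1/8) k])
    exact ⟨f, hf, h2⟩
  choose h hC hF2 using exh
  have hmeas : ∀ k, Measurable (h k) := fun k => (hm _ _ (hC k)).1
  have hnn : ∀ k ω, 0 ≤ h k ω := fun k => (hm _ _ (hC k)).2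
  have IS : ∀ n, I n ≤ S := fun n => le_ciSup Ibdd n
  -- square gap
  have int1 := fun k => inv_int P (h k) (hmeas k) (hnn k)
  have gap : ∀ k, ∫ ω, (1 / (1 + h k ω) - 1 / (1 + h (k+1) ω)) ^ 2 ∂P ≤ 8 * (1/8) ^ k := by
    intro k
    have mem : (1/2 : ℝ) • h k + (1/2 : ℝ) • h (k+1) ∈ C (φ k) :=
      hconv _ (hC k) (hanti (φmono (Nat.le_succ k)) (hC (k+1))) (by norm_num) (by norm_num)
        (by norm_num)
    have l1 : I (φ k) ≤ F ((1/2 : ℝ) • h k + (1/2 : ℝ) • h (k+1)) := csInf_le (bdd _) ⟨_, mem, rfl⟩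
    have intm := inv_int P _ (hm _ _ mem).1 (hm _ _ mem).2
    simp only [Pi.add_apply, Pi.smul_apply, smul_eq_mul] at intm
    have iadd : Integrable (fun ω => (1 / (1 + h k ω) + 1 / (1 + h (k+1) ω)) / 2) P :=
      ((int1 k).add (int1 (k+1))).div_const 2
    have e : ∫ ω, 4 * ((1 / (1 + h k ω) + 1 / (1 + h (k+1) ω)) / 2
        - 1 / (1 + (1/2 * h k ω + 1/2 * h (k+1) ω))) ∂P
        = 4 * ((F (h k) + F (h (k+1))) / 2 - F ((1/2 : ℝ) • h k + (1/2 : ℝ) • h (k+1))) := by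
      rw [integral_const_mul, integral_sub iadd intm,
        integral_div, integral_add (int1 k) (int1 (k+1))]
      rfl
    have l2 : ∫ ω, (1 / (1 + h k ω) - 1 / (1 + h (k+1) ω)) ^ 2 ∂P ≤
      ∫ ω, 4 * ((1 / (1 + h k ω) + 1 / (1 + h (k+1) ω)) / 2
        - 1 / (1 + (1/2 * h k ω + 1/2 * h (k+1) ω))) ∂P := by
      refine integral_mono_of_nonneg (ae_of_all _ fun ω => by positivity)
        ((iadd.sub intm).const_mul 4)
        (ae_of_all _ fun ω => gap_ineq _ _ (hnn _ _) (hnn _ _))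
    rw [e] at l2
    have p : (1/8 : ℝ) ^ (k+1) = (1/8) ^ k / 8 := by ring
    have := hF2 k
    have := hF2 (k+1)
    have := hφS k
    have := IS (φ (k+1))
    have := pow_pos (by norm_num : (0:ℝ) < 1/8) k
    linarith
  -- summability
  have gap1 : ∀ k, ∫ ω, |1 / (1 + h k ω) - 1 / (1 + h (k+1) ω)| ∂P ≤ 9 * (1/2) ^ k := by
    intro k
    have isq : Integrable (fun ω => (1 / (1 + h k ω) - 1 / (1 + h (k+1) ω)) ^ 2) P := by
      refine Integrable.of_bound (C := 1) (Measurable.aestronglyMeasurable ?_)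
        (ae_of_all _ fun ω => ?_)
      · have := hmeas k
        have := hmeas (k+1)
        fun_prop
      · have h1 := hnn k ω
        have h2 := hnn (k+1) ω
        have a1 : 0 ≤ 1 / (1 + h k ω) := by positivity
        have a2 : 0 ≤ 1 / (1 + h (k+1) ω) := by positivity
        have a3 : 1 / (1 + h k ω) ≤ 1 := by rw [div_le_one (by linarith)]; linarith
        have a4 : 1 / (1 + h (k+1) ω) ≤ 1 := by rw [div_le_one (by linarith)]; linarith
        rw [Real.norm_of_nonneg (by positivity), sq_le_one_iff_abs_le_one, abs_le]
        constructor <;> linarith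
    have l : ∫ ω, |1 / (1 + h k ω) - 1 / (1 + h (k+1) ω)| ∂P ≤
        ∫ ω, ((1/2) ^ k + 2 ^ k * (1 / (1 + h k ω) - 1 / (1 + h (k+1) ω)) ^ 2) ∂P := by
      apply integral_mono ((int1 k).sub (int1 (k+1))).abs ((integrable_const _).add (isq.const_mul _))
      intro ω
      simp only [Pi.add_apply, Pi.sub_apply]
      generalize 1 / (1 + h k ω) - 1 / (1 + h (k+1) ω) = d
      have p : (1/2 : ℝ) ^ k * 2 ^ k = 1 := by rw [← mul_pow]; norm_num
      have q : (0:ℝ) < 2 ^ k := by positivity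
      rw [← sq_abs d]
      set x := |d|
      have : (1/2 : ℝ) ^ k = (2 ^ k)⁻¹ := by rw [one_div, inv_pow]
      rw [this]
      have e : (2 ^ k : ℝ)⁻¹ + 2 ^ k * x ^ 2 - x = 2 ^ k * ((x - (2 ^ k)⁻¹ / 2) ^ 2 + 3/4 * ((2 ^ k)⁻¹) ^ 2) := by
        field_simp
        ring
      have : 0 ≤ 2 ^ k * ((x - (2 ^ k : ℝ)⁻¹ / 2) ^ 2 + 3/4 * ((2 ^ k)⁻¹) ^ 2) := by positivity
      linarith
    rw [integral_add (integrable_const _) (isq.const_mul _), integral_const_mul] at l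
    simp only [integral_const, probReal_univ, one_smul] at l
    have := gap k
    have p : (2:ℝ) ^ k * (8 * (1/8) ^ k) = 8 * (1/4) ^ k := by
      rw [mul_left_comm, ← mul_pow]; norm_num
    have p2 : (1/4 : ℝ) ^ k ≤ (1/2) ^ k := by gcongr; norm_num
    have : (2:ℝ) ^ k * ∫ ω, (1 / (1 + h k ω) - 1 / (1 + h (k+1) ω)) ^ 2 ∂P ≤ 2 ^ k * (8 * (1/8) ^ k) := by
      gcongr
    linarith
  have conv : ∀ᵐ ω ∂P, CauchySeq (fun k => 1 / (1 + h k ω)) := by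
    have fin : ∫⁻ ω, ∑' k, ENNReal.ofReal |1 / (1 + h k ω) - 1 / (1 + h (k+1) ω)| ∂P ≠ ⊤ := by
      rw [lintegral_tsum (fun k => by
        have := hmeas k
        have := hmeas (k+1)
        fun_prop)]
      have : ∑' k, ∫⁻ ω, ENNReal.ofReal |1 / (1 + h k ω) - 1 / (1 + h (k+1) ω)| ∂P ≤
          ∑' k : ℕ, ENNReal.ofReal (9 * (1/2) ^ k) := by
        refine ENNReal.tsum_le_tsum fun k => ?_
        have iab : Integrable (fun ω => |1 / (1 + h k ω) - 1 / (1 + h (k+1) ω)|) P :=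
          ((int1 k).sub (int1 (k+1))).abs
        rw [← ofReal_integral_eq_lintegral_ofReal iab
          (ae_of_all _ fun ω => abs_nonneg _)]
        exact ENNReal.ofReal_le_ofReal (gap1 k)
      refine ne_top_of_le_ne_top ?_ this
      rw [← ENNReal.ofReal_tsum_of_nonneg (fun k => by positivity)
        ((summable_geometric_of_lt_one (by norm_num) (by norm_num)).mul_left 9)]
      exact ENNReal.ofReal_ne_top
    have := ae_lt_top' (by
      refine AEMeasurable.tsum fun k => ?_
      have := hmeas k
      have := hmeas (k+1)
      fun_prop) fin
    filter_upwards [this] with ω hω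
    apply cauchySeq_of_summable_dist
    have s := ENNReal.summable_toReal hω.ne
    convert s using 2 with k
    rw [ENNReal.toReal_ofReal (abs_nonneg _), Real.dist_eq]
  have notzero : ∀ᵐ ω ∂P, ¬ Tendsto (fun k => 1 / (1 + h k ω)) atTop (𝓝 0) := by
    rw [ae_iff]
    simp only [not_not]
    refine le_antisymm (ENNReal.le_of_forall_pos_le_add ?_) zero_le
    intro δ hδ _
    obtain ⟨c, hc⟩ := hb δ hδ
    rw [zero_add]
    set B : ℕ → Set Ω := fun n => ⋂ k ≥ n, {ω | c < h k ω} with hB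
    have sub : {ω | Tendsto (fun k => 1 / (1 + h k ω)) atTop (𝓝 0)} ⊆ ⋃ n, B n := by
      intro ω hω
      have : ∀ᶠ k in atTop, 1 / (1 + h k ω) < 1 / (1 + |c|) :=
        (show Tendsto _ _ _ from hω).eventually (gt_mem_nhds (by positivity))
      obtain ⟨n, hn⟩ := eventually_atTop.1 this
      simp only [hB, Set.mem_iUnion, Set.mem_iInter]
      refine ⟨n, fun k hk => ?_⟩
      have := hn k hk
      have h1 := hnn k ω
      rw [one_div_lt_one_div (by linarith) (by positivity)] at this
      have := le_abs_self c
      show c < h k ω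
      linarith
    refine (measure_mono sub).trans ?_
    have Bm : Monotone B := fun a b hab =>
      Set.biInter_mono (fun k (hk : b ≤ k) => hab.trans hk) fun _ _ => le_rfl
    rw [Bm.measure_iUnion]
    refine iSup_le fun n => ?_
    refine (measure_mono (Set.biInter_subset_of_mem (le_refl n))).trans ?_
    refine (hc (h n) (hanti (Nat.zero_le _) (hC n))).trans ?_
    simp
  have lim : ∀ᵐ ω ∂P, ∃ l, Tendsto (fun k => h k ω) atTop (𝓝 l) := by
    filter_upwards [conv, notzero] with ω h1 h2
    obtain ⟨u, hu⟩ := cauchySeq_tendsto_of_complete h1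
    have hu0 : u ≠ 0 := by rintro rfl; exact h2 hu
    refine ⟨1 / u - 1, ?_⟩
    have := (hu.inv₀ hu0).sub_const 1
    rw [one_div]
    refine this.congr fun k => ?_
    have := hnn k ω
    field_simp
    ring
  obtain ⟨g, gm, hg⟩ := measurable_limit_of_tendsto_metrizable_ae (fun k => (hmeas k).aemeasurable) lim
  refine ⟨φ, h, fun ω => max (g ω) 0, hφ, hC, fun k f hf => ?_, gm.max measurable_const,
    fun ω => le_max_right _ _, ?_⟩
  · have := csInf_le (bdd (φ k)) ⟨f, hf, rfl⟩
    exact (hF2 k).le.trans (by linarith)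
  · filter_upwards [hg] with ω hω
    have : 0 ≤ g ω := ge_of_tendsto' hω fun k => hnn k ω
    rwa [max_eq_left this]

lemma dens {Ω : Type*} [MeasurableSpace Ω] (P : Measure Ω) [IsProbabilityMeasure P]
    (K : Set (Ω → ℝ)) (hm : ∀ f ∈ K, Measurable f ∧ ∀ ω, 0 ≤ f ω)
    (hconv : Convex ℝ K) (hne : K.Nonempty)
    (hb : ∀ δ : ℝ, 0 < δ → ∃ c : ℝ, ∀ f ∈ K, P {ω | c < f ω} ≤ ENNReal.ofReal δ) :
    ∃ g : Ω → ℝ, Measurable g ∧ (∀ ω, 0 ≤ g ω) ∧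
      ∀ X ∈ K, ∫⁻ ω, ENNReal.ofReal ((1 + X ω) / (1 + g ω) ^ 2) ∂P ≤ 1 := by
  obtain ⟨φ, h, g, -, hC, hmin, gm, g0, hlim⟩ := sel P (fun _ => K) (fun _ => hm)
    (fun _ _ _ => le_rfl) (fun _ => hconv) (fun _ => hne) hb
  refine ⟨g, gm, g0, fun X hX => ?_⟩
  obtain ⟨Xm, X0⟩ := hm X hX
  have hmeas : ∀ k, Measurable (h k) := fun k => (hm _ (hC k)).1
  have hnn : ∀ k ω, 0 ≤ h k ω := fun k => (hm _ (hC k)).2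
  have bd : ∀ x : ℝ, 0 ≤ x → ‖1 / (1 + x)‖ ≤ 1 := fun x hx => by
    rw [Real.norm_of_nonneg (by positivity), div_le_one (by linarith)]
    linarith
  -- one-sided optimality of the limit
  have opt : ∀ t : ℝ, 0 < t → t ≤ 1 →
      ∫ ω, 1 / (1 + g ω) ∂P ≤ ∫ ω, 1 / (1 + ((1 - t) * g ω + t * X ω)) ∂P := by
    intro t t0 t1
    have t2 : 0 ≤ 1 - t := by linarith
    have L1 : Tendsto (fun k => ∫ ω, 1 / (1 + h k ω) ∂P) atTop (𝓝 (∫ ω, 1 / (1 + g ω) ∂P)) := by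
      refine tendsto_integral_of_dominated_convergence (fun _ => (1:ℝ))
        (fun k => (inv_int P _ (hmeas k) (hnn k)).aestronglyMeasurable) (integrable_const _)
        (fun k => ae_of_all _ fun ω => bd _ (hnn k ω)) ?_
      filter_upwards [hlim] with ω hω
      exact tendsto_const_nhds.div (hω.const_add 1) (by linarith [g0 ω])
    have L2 : Tendsto (fun k => ∫ ω, 1 / (1 + ((1 - t) * h k ω + t * X ω)) ∂P) atTop
        (𝓝 (∫ ω, 1 / (1 + ((1 - t) * g ω + t * X ω)) ∂P)) := by
      have nn : ∀ k ω, 0 ≤ (1 - t) * h k ω + t * X ω := fun k ω => by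
        have := hnn k ω
        have := X0 ω
        positivity
      refine tendsto_integral_of_dominated_convergence (fun _ => (1:ℝ))
        (fun k => (inv_int P _ (((hmeas k).const_mul _).add (Xm.const_mul _))
          (nn k)).aestronglyMeasurable) (integrable_const _)
        (fun k => ae_of_all _ fun ω => bd _ (nn k ω)) ?_
      filter_upwards [hlim] with ω hω
      refine tendsto_const_nhds.div (((hω.const_mul _).add_const _).const_add 1) ?_
      have := g0 ω
      have := X0 ω
      positivity
    have L3 : Tendsto (fun k : ℕ => ∫ ω, 1 / (1 + ((1 - t) * h k ω + t * X ω)) ∂P + (1/8 : ℝ) ^ k) atTop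
        (𝓝 (∫ ω, 1 / (1 + ((1 - t) * g ω + t * X ω)) ∂P + 0)) :=
      L2.add (tendsto_pow_atTop_nhds_zero_of_lt_one (by norm_num) (by norm_num))
    rw [add_zero] at L3
    refine le_of_tendsto_of_tendsto' L1 L3 fun k => ?_
    exact hmin k ((1 - t) • h k + t • X) (hconv (hC k) hX t2 t0.le (by ring))
  -- bound for fixed t
  have key : ∀ t : ℝ, 0 < t → t ≤ 1 →
      ∫⁻ ω, ENNReal.ofReal ((1 + X ω) / ((1 + g ω) * (1 + ((1 - t) * g ω + t * X ω)))) ∂P ≤ 1 := by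
    intro t t0 t1
    have t2 : 0 ≤ 1 - t := by linarith
    have nn : ∀ ω, 0 ≤ (1 - t) * g ω + t * X ω := fun ω => by
      have := g0 ω
      have := X0 ω
      positivity
    have i1 := inv_int P g gm g0
    have i2 := inv_int P _ ((gm.const_mul (1 - t)).add (Xm.const_mul t)) nn
    simp only [Pi.add_apply] at i2
    have eq : ∀ ω, (1 + X ω) / ((1 + g ω) * (1 + ((1 - t) * g ω + t * X ω)))
        = 1 / (1 + ((1 - t) * g ω + t * X ω)) +
          (1 / (1 + g ω) - 1 / (1 + ((1 - t) * g ω + t * X ω))) / t := fun ω => by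
      have a := nn ω
      have b := g0 ω
      have a' : 1 + ((1 - t) * g ω + t * X ω) ≠ 0 := by linarith
      have b' : 1 + g ω ≠ 0 := by linarith
      generalize hc : 1 + ((1 - t) * g ω + t * X ω) = c at a'
      have hx : X ω = (c - 1 - (1 - t) * g ω) / t := by
        rw [← hc]
        field_simp
        ring
      rw [hx]
      field_simp
      ring
    have i3 : Integrable (fun ω => (1 / (1 + g ω) - 1 / (1 + ((1 - t) * g ω + t * X ω))) / t) P :=
      (i1.sub i2).div_const t
    simp_rw [eq]
    have i4 : Integrable (fun ω => 1 / (1 + ((1 - t) * g ω + t * X ω)) +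
        (1 / (1 + g ω) - 1 / (1 + ((1 - t) * g ω + t * X ω))) / t) P := i2.add i3
    rw [← ofReal_integral_eq_lintegral_ofReal i4 (ae_of_all _ fun ω => by
      show 0 ≤ 1 / (1 + ((1 - t) * g ω + t * X ω)) +
          (1 / (1 + g ω) - 1 / (1 + ((1 - t) * g ω + t * X ω))) / t
      rw [← eq]
      have := g0 ω
      have := X0 ω
      positivity)]
    rw [ENNReal.ofReal_le_one]
    rw [integral_add i2 i3, integral_div, integral_sub i1 i2]
    have o := opt t t0 t1
    have : (∫ ω, 1 / (1 + g ω) ∂P - ∫ ω, 1 / (1 + ((1 - t) * g ω + t * X ω)) ∂P) / t ≤ 0 :=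
      div_nonpos_of_nonpos_of_nonneg (by linarith) t0.le
    have u : ∫ ω, 1 / (1 + ((1 - t) * g ω + t * X ω)) ∂P ≤ ∫ ω, (1:ℝ) ∂P :=
      integral_mono i2 (integrable_const _) fun ω => (Real.le_norm_self _).trans (bd _ (nn ω))
    simp only [integral_const, probReal_univ, one_smul] at u
    linarith
  -- Fatou
  have tlim : Tendsto (fun j : ℕ => 1 / ((j:ℝ) + 1)) atTop (𝓝 0) :=
    tendsto_one_div_add_atTop_nhds_zero_nat
  have pt : ∀ ω, Tendsto (fun j : ℕ => ENNReal.ofReal ((1 + X ω) /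
      ((1 + g ω) * (1 + ((1 - 1 / ((j:ℝ) + 1)) * g ω + 1 / ((j:ℝ) + 1) * X ω))))) atTop
      (𝓝 (ENNReal.ofReal ((1 + X ω) / (1 + g ω) ^ 2))) := fun ω => by
    refine ENNReal.tendsto_ofReal ?_
    have : Tendsto (fun j : ℕ => (1 + X ω) /
      ((1 + g ω) * (1 + ((1 - 1 / ((j:ℝ) + 1)) * g ω + 1 / ((j:ℝ) + 1) * X ω)))) atTop
      (𝓝 ((1 + X ω) / ((1 + g ω) * (1 + ((1 - 0) * g ω + 0 * X ω))))) := by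
      refine tendsto_const_nhds.div (((((tlim.const_sub 1).mul_const _).add
        (tlim.mul_const _)).const_add 1).const_mul _) ?_
      have := g0 ω
      simp only [sub_zero, one_mul, zero_mul, add_zero]
      positivity
    simpa [sq] using this
  calc ∫⁻ ω, ENNReal.ofReal ((1 + X ω) / (1 + g ω) ^ 2) ∂P
      = ∫⁻ ω, liminf (fun j : ℕ => ENNReal.ofReal ((1 + X ω) /
      ((1 + g ω) * (1 + ((1 - 1 / ((j:ℝ) + 1)) * g ω + 1 / ((j:ℝ) + 1) * X ω))))) atTop ∂P :=
        lintegral_congr fun ω => (pt ω).liminf_eq.symm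
    _ ≤ liminf (fun j : ℕ => ∫⁻ ω, ENNReal.ofReal ((1 + X ω) /
      ((1 + g ω) * (1 + ((1 - 1 / ((j:ℝ) + 1)) * g ω + 1 / ((j:ℝ) + 1) * X ω)))) ∂P) atTop :=
        lintegral_liminf_le fun j => by fun_prop
    _ ≤ liminf (fun j : ℕ => (1 : ENNReal)) atTop := by
        refine liminf_le_liminf (Eventually.of_forall fun j => key _ (by positivity) ?_)
        rw [div_le_one (by positivity)]
        have : (0:ℝ) ≤ j := Nat.cast_nonneg j
        linarith
    _ = 1 := by simp

/-- the convex hull of the excesses over level `n` -/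
def CC {Ω : Type*} (𝒳 : Set (Ω → ℝ)) (n : ℕ) : Set (Ω → ℝ) :=
  convexHull ℝ {f | ∃ X ∈ 𝒳, f = fun ω => max (X ω - n) 0}

lemma CC_nonneg {Ω : Type*} {𝒳 : Set (Ω → ℝ)} (n : ℕ) : ∀ f ∈ CC 𝒳 n, ∀ ω, 0 ≤ f ω := by
  have : CC 𝒳 n ⊆ {f : Ω → ℝ | ∀ ω, 0 ≤ f ω} := by
    refine convexHull_min ?_ ?_
    · rintro _ ⟨X, hX, rfl⟩ ω
      exact le_max_right _ _
    · intro f hf g hg a b ha hb _ ω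
      have := hf ω
      have := hg ω
      simp only [Pi.add_apply, Pi.smul_apply, smul_eq_mul]
      positivity
  exact this

section
variable {Ω : Type*} [MeasurableSpace Ω] {P : Measure Ω} {𝒳 : Set (Ω → ℝ)}

lemma CC_sub (h𝒳 : 𝒳 ⊆ L0pos P) (hconv : Convex ℝ 𝒳) (hsolid : Solid P 𝒳) (n : ℕ) :
    CC 𝒳 n ⊆ 𝒳 := by
  refine convexHull_min ?_ hconv
  rintro _ ⟨X, hX, rfl⟩
  refine hsolid X hX _ ⟨((h𝒳 hX).1.sub_const _).max measurable_const,
    ae_of_all _ fun ω => le_max_right _ _⟩ ?_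
  filter_upwards [(h𝒳 hX).2] with ω hω
  have : (0:ℝ) ≤ n := Nat.cast_nonneg n
  exact max_le (by linarith) hω

lemma CC_anti (h𝒳 : 𝒳 ⊆ L0pos P) (hsolid : Solid P 𝒳) : Antitone (CC 𝒳) := by
  refine antitone_nat_of_succ_le fun n => convexHull_mono ?_
  rintro _ ⟨X, hX, rfl⟩
  refine ⟨fun ω => max (X ω - 1) 0, hsolid X hX _ ⟨((h𝒳 hX).1.sub_const _).max measurable_const,
    ae_of_all _ fun ω => le_max_right _ _⟩ ?_, ?_⟩
  · filter_upwards [(h𝒳 hX).2] with ω hω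
    exact max_le (by linarith) hω
  · ext ω
    have : (0:ℝ) ≤ n := Nat.cast_nonneg n
    push_cast
    rcases le_total (X ω - 1) 0 with h | h
    · rw [max_eq_right h, max_eq_right (by linarith), max_eq_right (by linarith)]
    · rw [max_eq_left h]
      congr 1
      ring

lemma CC_mul (h𝒳 : 𝒳 ⊆ L0pos P) (hsolid : Solid P 𝒳) (n : ℕ) (θ : Ω → ℝ) (hθ : Measurable θ)
    (h0 : ∀ ω, 0 ≤ θ ω) (h1 : ∀ ω, θ ω ≤ 1) : ∀ f ∈ CC 𝒳 n, (fun ω => θ ω * f ω) ∈ CC 𝒳 n := by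
  have : CC 𝒳 n ⊆ {f : Ω → ℝ | (fun ω => θ ω * f ω) ∈ CC 𝒳 n} := by
    refine convexHull_min ?_ ?_
    · rintro _ ⟨X, hX, rfl⟩
      have Xm := (h𝒳 hX).1
      have n0 : (0:ℝ) ≤ n := Nat.cast_nonneg n
      refine subset_convexHull _ _ ⟨fun ω => min (X ω) n + θ ω * max (X ω - n) 0,
        hsolid X hX _ ⟨by fun_prop, ?_⟩ (ae_of_all _ fun ω => ?_), ?_⟩
      · filter_upwards [(h𝒳 hX).2] with ω hω
        have := h0 ω
        positivity
      · rcases le_total (X ω) n with h | h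
        · rw [min_eq_left h, max_eq_right (by linarith)]
          simp
        · rw [min_eq_right h, max_eq_left (by linarith)]
          nlinarith [h1 ω]
      · ext ω
        simp only
        rcases le_total (X ω) n with h | h
        · rw [min_eq_left h, max_eq_right (by linarith : X ω - n ≤ 0)]
          simp [h]
        · rw [min_eq_right h, max_eq_left (by linarith : 0 ≤ X ω - n), add_sub_cancel_left,
            max_eq_left]
          exact mul_nonneg (h0 ω) (by linarith)
    · intro f hf g hg a b ha hb hab
      have := convex_convexHull ℝ {f : Ω → ℝ | ∃ X ∈ 𝒳, f = fun ω => max (X ω - n) 0} hf hg ha hb hab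
      show (fun ω => θ ω * (a • f + b • g) ω) ∈ CC 𝒳 n
      have e : (fun ω => θ ω * (a • f + b • g) ω)
          = a • (fun ω => θ ω * f ω) + b • (fun ω => θ ω * g ω) := ?_
      · rw [e]
        exact this
      funext ω
      show θ ω * (a * f ω + b * g ω) = a * (θ ω * f ω) + b * (θ ω * g ω)
      ring
  exact this

lemma CC_solid (h𝒳 : 𝒳 ⊆ L0pos P) (hconv : Convex ℝ 𝒳) (hsolid : Solid P 𝒳) (n : ℕ)
    (W : Ω → ℝ) (hW : W ∈ CC 𝒳 n) (Y : Ω → ℝ) (hY : Measurable Y) (h0 : ∀ ω, 0 ≤ Y ω)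
    (h1 : ∀ ω, Y ω ≤ W ω) : Y ∈ CC 𝒳 n := by
  have Wm := (h𝒳 (CC_sub h𝒳 hconv hsolid n hW)).1
  have W0 := CC_nonneg n W hW
  have := CC_mul h𝒳 hsolid n (fun ω => Y ω / W ω) (hY.div Wm)
    (fun ω => div_nonneg (h0 ω) (W0 ω)) (fun ω => div_le_one_of_le₀ (h1 ω) (W0 ω)) W hW
  convert this using 1
  ext ω
  by_cases h : W ω = 0
  · have a := h0 ω
    have b := h1 ω
    rw [h] at b ⊢
    simp
    linarith
  · rw [div_mul_cancel₀ _ h]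

/-- Under the intersection condition, the sets `CC 𝒳 n` shrink to zero uniformly in probability. -/
lemma CC_small [IsProbabilityMeasure P]
    (h𝒳 : 𝒳 ⊆ L0pos P) (hconv : Convex ℝ 𝒳) (hsolid : Solid P 𝒳)
    (hb : ∀ δ : ℝ, 0 < δ → ∃ c : ℝ, ∀ f ∈ 𝒳, P {ω | c < f ω} ≤ ENNReal.ofReal δ)
    (H : ∀ Y ∈ L0pos P, (∀ n : ℕ, Y ∈ CC 𝒳 n) → ∀ᵐ ω ∂P, Y ω = 0)
    (ε : ℝ) (hε : 0 < ε) :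
    ∃ n, ∀ Y ∈ CC 𝒳 n, P {ω | ε < Y ω} ≤ ENNReal.ofReal ε := by
  by_contra! hcon
  have Cm : ∀ n, ∀ f ∈ CC 𝒳 n, Measurable f := fun n f hf => (h𝒳 (CC_sub h𝒳 hconv hsolid n hf)).1
  set B : ℕ → Set (Ω → ℝ) := fun n => {Y | Y ∈ CC 𝒳 n ∧ (∀ ω, Y ω ≤ ε) ∧ ε * ε ≤ ∫ ω, Y ω ∂P} with hB
  have Bint : ∀ n, ∀ Y ∈ B n, Integrable Y P := fun n Y hY =>
    Integrable.of_bound (C := ε) (Cm n Y hY.1).aestronglyMeasurable (ae_of_all _ fun ω => by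
      rw [Real.norm_of_nonneg (CC_nonneg n Y hY.1 ω)]
      exact hY.2.1 ω)
  obtain ⟨φ, h, g, hφ, hC, -, gm, g0, hlim⟩ := sel P B
    (fun n f hf => ⟨Cm n f hf.1, CC_nonneg n f hf.1⟩)
    (fun a b hab f hf => ⟨CC_anti h𝒳 hsolid hab hf.1, hf.2⟩)
    (fun n f hf g hg a b ha hb hab => by
      refine ⟨convex_convexHull ℝ _ hf.1 hg.1 ha hb hab, fun ω => ?_, ?_⟩
      · have h1 := mul_le_mul_of_nonneg_left (hf.2.1 ω) ha
        have h2 := mul_le_mul_of_nonneg_left (hg.2.1 ω) hb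
        simp only [Pi.add_apply, Pi.smul_apply, smul_eq_mul]
        calc _ ≤ a * ε + b * ε := add_le_add h1 h2
          _ = ε := by rw [← add_mul, hab, one_mul]
      · have e : ∫ ω, (a • f + b • g) ω ∂P = a * ∫ ω, f ω ∂P + b * ∫ ω, g ω ∂P := by
          rw [integral_add' ((Bint n f hf).smul a) ((Bint n g hg).smul b)]
          simp [integral_const_mul]
        rw [e]
        have h1 := mul_le_mul_of_nonneg_left hf.2.2 ha
        have h2 := mul_le_mul_of_nonneg_left hg.2.2 hb
        calc ε * ε = a * (ε * ε) + b * (ε * ε) := by rw [← add_mul, hab, one_mul]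
          _ ≤ _ := add_le_add h1 h2)
    (fun n => by
      obtain ⟨Y, hY, hP⟩ := hcon n
      have ms : MeasurableSet {ω | ε < Y ω} := measurableSet_lt measurable_const (Cm n Y hY)
      refine ⟨Set.indicator {ω | ε < Y ω} fun _ => ε, ?_, ?_, ?_⟩
      · refine CC_solid h𝒳 hconv hsolid n Y hY _ (measurable_const.indicator ms)
          (fun ω => Set.indicator_nonneg (fun _ _ => hε.le) ω) fun ω => ?_
        by_cases hω : ω ∈ {ω | ε < Y ω}
        · rw [Set.indicator_of_mem hω]
          exact le_of_lt hω
        · rw [Set.indicator_of_notMem hω]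
          exact CC_nonneg n Y hY ω
      · intro ω
        exact Set.indicator_le_self' (fun _ _ => hε.le) ω
      · rw [integral_indicator_const _ ms, smul_eq_mul]
        have : ε ≤ P.real {ω | ε < Y ω} := by
          rw [measureReal_def]
          exact (ENNReal.ofReal_le_iff_le_toReal (measure_ne_top _ _)).1 hP.le
        gcongr)
    (fun δ hδ => by
      obtain ⟨c, hc⟩ := hb δ hδ
      exact ⟨c, fun f hf => hc f (CC_sub h𝒳 hconv hsolid 0 hf.1)⟩)
  have hmeas : ∀ k, Measurable (h k) := fun k => Cm _ _ (hC k).1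
  have hnn : ∀ k ω, 0 ≤ h k ω := fun k => CC_nonneg _ _ (hC k).1
  have gint : ε * ε ≤ ∫ ω, g ω ∂P := by
    refine ge_of_tendsto' (tendsto_integral_of_dominated_convergence (fun _ => ε)
      (fun k => (hmeas k).aestronglyMeasurable) (integrable_const _)
      (fun k => ae_of_all _ fun ω => ?_) hlim) fun k => (hC k).2.2
    rw [Real.norm_of_nonneg (hnn k ω)]
    exact (hC k).2.1 ω
  have bb : ∀ M ω, BddBelow (Set.range fun k => h (M + k) ω) := fun M ω =>
    ⟨0, by rintro _ ⟨k, rfl⟩; exact hnn _ ω⟩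
  have z : ∀ M, ∀ᵐ ω ∂P, (⨅ k, h (M + k) ω) = 0 := fun M => by
    have m : Measurable fun ω => ⨅ k, h (M + k) ω := Measurable.iInf fun k => hmeas _
    have nn : ∀ ω, 0 ≤ ⨅ k, h (M + k) ω := fun ω => le_ciInf fun k => hnn _ ω
    refine H _ ⟨m, ae_of_all _ nn⟩ fun n => ?_
    have h1 : n ≤ φ (M + n) := (Nat.le_add_left n M).trans (hφ _)
    exact CC_solid h𝒳 hconv hsolid n (h (M + n)) (CC_anti h𝒳 hsolid h1 (hC (M + n)).1) _ m nn
      fun ω => ciInf_le (bb M ω) n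
  have gz : ∀ᵐ ω ∂P, g ω = 0 := by
    filter_upwards [hlim, ae_all_iff.2 z] with ω h1 h2
    by_contra hg
    have gpos : 0 < g ω := lt_of_le_of_ne (g0 ω) (Ne.symm hg)
    obtain ⟨M, hM⟩ := eventually_atTop.1 (h1.eventually (lt_mem_nhds (half_lt_self gpos)))
    have : g ω / 2 ≤ ⨅ k, h (M + k) ω := le_ciInf fun k => (hM _ (Nat.le_add_right _ _)).le
    rw [h2 M] at this
    linarith
  rw [integral_congr_ae gz] at gint
  simp at gint
  nlinarith

end

/-- Bounded convex sum of the rescaled sets `CC 𝒳 (n k)`. -/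
lemma exists_dens {Ω : Type*} [MeasurableSpace Ω] {P : Measure Ω} [IsProbabilityMeasure P]
    {𝒳 : Set (Ω → ℝ)} (hne : 𝒳.Nonempty)
    (h𝒳 : 𝒳 ⊆ L0pos P) (hconv : Convex ℝ 𝒳) (hsolid : Solid P 𝒳)
    (hb : ∀ δ : ℝ, 0 < δ → ∃ c : ℝ, ∀ f ∈ 𝒳, P {ω | c < f ω} ≤ ENNReal.ofReal δ)
    (H : ∀ Y ∈ L0pos P, (∀ n : ℕ, Y ∈ CC 𝒳 n) → ∀ᵐ ω ∂P, Y ω = 0) :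
    ∃ (n : ℕ → ℕ) (g : Ω → ℝ), Measurable g ∧ (∀ ω, 0 ≤ g ω) ∧ ∀ k, ∀ X ∈ CC 𝒳 (n k),
      ∫⁻ ω, ENNReal.ofReal ((1 + 2 ^ k * X ω) / (1 + g ω) ^ 2) ∂P ≤ 1 := by
  have ex : ∀ k : ℕ, ∃ n, ∀ Y ∈ CC 𝒳 n, P {ω | (1/4 : ℝ) ^ k < Y ω} ≤ ENNReal.ofReal ((1/4) ^ k) :=
    fun k => CC_small h𝒳 hconv hsolid hb H _ (by positivity)
  choose n hn using ex
  have zero : ∀ m, (0 : Ω → ℝ) ∈ CC 𝒳 m := fun m => by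
    obtain ⟨X, hX⟩ := hne
    have := CC_mul h𝒳 hsolid m (fun _ => 0) measurable_const (fun _ => le_rfl)
      (fun _ => zero_le_one) _ (subset_convexHull ℝ _ ⟨X, hX, rfl⟩)
    convert this using 1
    ext ω
    simp
  set K : Set (Ω → ℝ) := {f | ∃ (N : ℕ) (Y : ℕ → Ω → ℝ), (∀ k, Y k ∈ CC 𝒳 (n k)) ∧
    f = fun ω => ∑ k ∈ Finset.range N, 2 ^ k * Y k ω} with hK
  have Cm : ∀ n, ∀ f ∈ CC 𝒳 n, Measurable f := fun n f hf => (h𝒳 (CC_sub h𝒳 hconv hsolid n hf)).1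
  have pad : ∀ (N M : ℕ) (Y : ℕ → Ω → ℝ), N ≤ M → (∀ k, Y k ∈ CC 𝒳 (n k)) →
      ∃ Z : ℕ → Ω → ℝ, (∀ k, Z k ∈ CC 𝒳 (n k)) ∧ ∀ ω, ∑ k ∈ Finset.range N, 2 ^ k * Y k ω
        = ∑ k ∈ Finset.range M, 2 ^ k * Z k ω := by
    intro N M Y hNM hY
    refine ⟨fun k => if k < N then Y k else 0, fun k => ?_, fun ω => ?_⟩
    · by_cases h : k < N
      · simp only [h, if_true]
        exact hY k
      · simp only [h, if_false]
        exact zero _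
    · symm
      rw [← Finset.sum_subset (Finset.range_mono hNM)]
      · refine Finset.sum_congr rfl fun k hk => ?_
        simp only [if_pos (Finset.mem_range.1 hk)]
      · intro k _ hk
        have : ¬ k < N := by simpa using hk
        simp [this]
  have hKd : ∃ g : Ω → ℝ, Measurable g ∧ (∀ ω, 0 ≤ g ω) ∧
      ∀ X ∈ K, ∫⁻ ω, ENNReal.ofReal ((1 + X ω) / (1 + g ω) ^ 2) ∂P ≤ 1 := by
    refine dens P K ?_ ?_ ?_ ?_
    · rintro f ⟨N, Y, hY, rfl⟩
      refine ⟨Finset.measurable_fun_sum _ fun k _ => (Cm _ _ (hY k)).const_mul _, fun ω => ?_⟩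
      exact Finset.sum_nonneg fun k _ => mul_nonneg (by positivity) (CC_nonneg _ _ (hY k) ω)
    · rintro f ⟨N, Y, hY, rfl⟩ f' ⟨N', Y', hY', rfl⟩ a b ha hb hab
      obtain ⟨Z, hZ, e⟩ := pad N (max N N') Y (le_max_left _ _) hY
      obtain ⟨Z', hZ', e'⟩ := pad N' (max N N') Y' (le_max_right _ _) hY'
      refine ⟨max N N', fun k => a • Z k + b • Z' k,
        fun k => convex_convexHull ℝ _ (hZ k) (hZ' k) ha hb hab, ?_⟩
      ext ω
      simp only [Pi.add_apply, Pi.smul_apply, smul_eq_mul, e, e', Finset.mul_sum]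
      rw [← Finset.sum_add_distrib]
      refine Finset.sum_congr rfl fun k _ => ?_
      ring
    · exact ⟨_, 0, fun _ => 0, fun k => zero _, rfl⟩
    · intro δ hδ
      obtain ⟨m, hm⟩ := exists_pow_lt_of_lt_one hδ (by norm_num : (1/2 : ℝ) < 1)
      have hm' : (1/2 : ℝ) ^ (m+1) ≤ δ / 2 := by rw [pow_succ]; linarith
      have exc : ∀ k : ℕ, ∃ c : ℝ, ∀ f ∈ 𝒳, P {ω | c < f ω} ≤ ENNReal.ofReal (δ / 2 * (1/2) ^ k) :=
        fun k => hb _ (by positivity)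
      choose c hc using exc
      set t : ℕ → ℝ := fun k => if k < m + 1 then c k else (1/4) ^ k with ht
      have tP : ∀ k, ∀ Y ∈ CC 𝒳 (n k), P {ω | t k < Y ω} ≤ ENNReal.ofReal (δ / 2 * (1/2) ^ k) := by
        intro k Y hY
        by_cases h : k < m + 1
        · simp only [ht, h, if_true]
          exact hc k Y (CC_sub h𝒳 hconv hsolid _ hY)
        · simp only [ht, h, if_false]
          refine (hn k Y hY).trans (ENNReal.ofReal_le_ofReal ?_)
          have e : (1/4 : ℝ) ^ k = (1/2) ^ k * (1/2) ^ k := by rw [← mul_pow]; norm_num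
          rw [e]
          gcongr
          exact (pow_le_pow_of_le_one (by norm_num) (by norm_num) (not_lt.1 h)).trans hm'
      set D : ℝ := ∑ k ∈ Finset.range (m+1), 2 ^ k * |c k| + 2 with hD
      have geo : ∀ N, ∑ k ∈ Finset.range N, (1/2 : ℝ) ^ k ≤ 2 := fun N => sum_geometric_two_le N
      have tD : ∀ N, ∑ k ∈ Finset.range N, 2 ^ k * t k ≤ D := by
        intro N
        have h1 : ∀ k, 2 ^ k * t k ≤ (if k < m + 1 then 2 ^ k * |c k| else 0) + (1/2) ^ k := by
          intro k
          by_cases h : k < m + 1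
          · simp only [ht, h, if_true]
            have : (2:ℝ) ^ k * c k ≤ 2 ^ k * |c k| := by
              gcongr
              exact le_abs_self _
            have : (0:ℝ) < (1/2) ^ k := by positivity
            linarith
          · simp only [ht, h, if_false, zero_add]
            rw [← mul_pow]
            norm_num
        refine (Finset.sum_le_sum fun k _ => h1 k).trans ?_
        rw [Finset.sum_add_distrib, hD]
        refine add_le_add ?_ (geo N)
        rw [← Finset.sum_filter]
        refine Finset.sum_le_sum_of_subset_of_nonneg ?_ fun k _ _ => by positivity
        intro k
        simp only [Finset.mem_filter, Finset.mem_range]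
        exact fun h => h.2
      refine ⟨D, ?_⟩
      rintro f ⟨N, Y, hY, rfl⟩
      have sub : {ω | D < ∑ k ∈ Finset.range N, 2 ^ k * Y k ω} ⊆
          ⋃ k ∈ Finset.range N, {ω | t k < Y k ω} := by
        intro ω hω
        by_contra hno
        simp only [Set.mem_iUnion, not_exists, Set.mem_ofPred_eq, not_lt] at hno
        have : ∑ k ∈ Finset.range N, 2 ^ k * Y k ω ≤ ∑ k ∈ Finset.range N, 2 ^ k * t k :=
          Finset.sum_le_sum fun k hk => mul_le_mul_of_nonneg_left (hno k hk) (by positivity)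
        exact absurd (this.trans (tD N)) (not_le.2 hω)
      refine (measure_mono sub).trans ((measure_biUnion_finset_le _ _).trans ?_)
      refine (Finset.sum_le_sum fun k _ => tP k (Y k) (hY k)).trans ?_
      rw [← ENNReal.ofReal_sum_of_nonneg fun k _ => by positivity, ← Finset.mul_sum]
      refine ENNReal.ofReal_le_ofReal ?_
      have := mul_le_mul_of_nonneg_left (geo N) (half_pos hδ).le
      linarith
  obtain ⟨g, gm, g0, hg⟩ := hKd
  · refine ⟨n, g, gm, g0, fun k X hX => ?_⟩
    refine hg (fun ω => 2 ^ k * X ω) ⟨k + 1, fun j => if h : j = k then X else 0, fun j => ?_, ?_⟩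
    · by_cases h : j = k
      · subst h
        simpa using hX
      · simpa [h] using zero _
    · ext ω
      rw [Finset.sum_range_succ, Finset.sum_eq_zero]
      · simp
      · intro j hj
        have : j ≠ k := (Finset.mem_range.1 hj).ne
        simp [this]

lemma easy_dir {Ω : Type*} [MeasurableSpace Ω] (P : Measure Ω)
    (𝒳 : Set (Ω → ℝ)) (h𝒳 : 𝒳 ⊆ L0pos P) (Q : Measure Ω) (hPQ : P ≪ Q) (hUI : UnifInt Q 𝒳)
    (Y : Ω → ℝ) (hY : Y ∈ L0pos P) (h : ∀ n, Y ∈ CC 𝒳 n) : ∀ᵐ ω ∂P, Y ω = 0 := by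
  have bound : ∀ n : ℕ, ∫⁻ ω, ENNReal.ofReal (Y ω) ∂Q ≤
      ⨆ X ∈ 𝒳, ∫⁻ ω in {ω | (n : ℝ) < X ω}, ENNReal.ofReal (X ω) ∂Q := by
    intro n
    set s := ⨆ X ∈ 𝒳, ∫⁻ ω in {ω | (n : ℝ) < X ω}, ENNReal.ofReal (X ω) ∂Q with hs
    have n0 : (0:ℝ) ≤ n := Nat.cast_nonneg n
    have : CC 𝒳 n ⊆ {f : Ω → ℝ | Measurable f ∧ ∫⁻ ω, ENNReal.ofReal (f ω) ∂Q ≤ s} := by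
      refine convexHull_min ?_ ?_
      · rintro _ ⟨X, hX, rfl⟩
        have Xm := (h𝒳 hX).1
        refine ⟨by fun_prop, ?_⟩
        refine le_trans ?_ (le_iSup₂ (f := fun X (_ : X ∈ 𝒳) =>
          ∫⁻ ω in {ω | (n : ℝ) < X ω}, ENNReal.ofReal (X ω) ∂Q) X hX)
        rw [← lintegral_indicator (measurableSet_lt measurable_const Xm)]
        refine lintegral_mono fun ω => ?_
        by_cases hω : (n : ℝ) < X ω
        · rw [Set.indicator_of_mem (show ω ∈ {ω | (n : ℝ) < X ω} from hω)]
          exact ENNReal.ofReal_le_ofReal (max_le (by linarith) (by linarith))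
        · simp only
          rw [max_eq_right (by linarith)]
          simp
      · rintro f ⟨fm, hf⟩ g ⟨gm, hg⟩ a b ha hb hab
        refine ⟨(fm.const_smul a).add (gm.const_smul b), ?_⟩
        calc ∫⁻ ω, ENNReal.ofReal ((a • f + b • g) ω) ∂Q
            ≤ ∫⁻ ω, (ENNReal.ofReal a * ENNReal.ofReal (f ω)
              + ENNReal.ofReal b * ENNReal.ofReal (g ω)) ∂Q := by
              refine lintegral_mono fun ω => ?_
              simp only [Pi.add_apply, Pi.smul_apply, smul_eq_mul]
              rw [← ENNReal.ofReal_mul ha, ← ENNReal.ofReal_mul hb]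
              exact ENNReal.ofReal_add_le
          _ = ENNReal.ofReal a * ∫⁻ ω, ENNReal.ofReal (f ω) ∂Q
              + ENNReal.ofReal b * ∫⁻ ω, ENNReal.ofReal (g ω) ∂Q := by
              rw [lintegral_add_left (by fun_prop), lintegral_const_mul _ (by fun_prop),
                lintegral_const_mul _ (by fun_prop)]
          _ ≤ ENNReal.ofReal a * s + ENNReal.ofReal b * s := by gcongr
          _ = s := by rw [← add_mul, ← ENNReal.ofReal_add ha hb, hab]; simp
    exact (this (h n)).2
  have z : ∫⁻ ω, ENNReal.ofReal (Y ω) ∂Q = 0 :=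
    le_antisymm (ge_of_tendsto' hUI bound) zero_le
  have Ym := hY.1
  rw [lintegral_eq_zero_iff (by fun_prop)] at z
  filter_upwards [hPQ.ae_le z, hY.2] with ω h1 h2
  exact le_antisymm (ENNReal.ofReal_eq_zero.1 h1) h2

/-- For a convex, solid, bounded-in-probability `𝒳 ⊆ L⁰₊`: `𝒳` is uniformly
`Q`-integrable for some probability `Q ~ P` iff `⋂ₙ conv {(X - n)₊ : X ∈ 𝒳} = {0}`. -/
theorem stmt_10 {Ω : Type*} [MeasurableSpace Ω] (P : Measure Ω) [IsProbabilityMeasure P]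
    (𝒳 : Set (Ω → ℝ)) (h𝒳 : 𝒳 ⊆ L0pos P) (hconv : Convex ℝ 𝒳) (hsolid : Solid P 𝒳)
    (hbdd : Tendsto (fun n : ℕ => ⨆ X ∈ 𝒳, P {ω | (n : ℝ) < X ω}) atTop (𝓝 0)) :
    (∃ Q : Measure Ω, IsProbabilityMeasure Q ∧ Q ≪ P ∧ P ≪ Q ∧ UnifInt Q 𝒳) ↔
    (∀ Y ∈ L0pos P,
      (∀ n : ℕ, Y ∈ convexHull ℝ {f | ∃ X ∈ 𝒳, f = fun ω => max (X ω - n) 0}) →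
      ∀ᵐ ω ∂P, Y ω = 0) := by
  constructor
  · rintro ⟨Q, -, -, hPQ, hUI⟩ Y hY h
    exact easy_dir P 𝒳 h𝒳 Q hPQ hUI Y hY h
  · intro H
    rcases 𝒳.eq_empty_or_nonempty with rfl | hne
    · exact ⟨P, inferInstance, Measure.AbsolutelyContinuous.rfl, Measure.AbsolutelyContinuous.rfl,
        by simp [UnifInt]⟩
    have hb : ∀ δ : ℝ, 0 < δ → ∃ c : ℝ, ∀ f ∈ 𝒳, P {ω | c < f ω} ≤ ENNReal.ofReal δ := by
      intro δ hδ
      obtain ⟨n, hn⟩ := (hbdd.eventually (gt_mem_nhds (ENNReal.ofReal_pos.2 hδ))).exists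
      exact ⟨n, fun f hf => (le_iSup₂ (f := fun X (_ : X ∈ 𝒳) => P {ω | (n : ℝ) < X ω}) f hf).trans
        hn.le⟩
    obtain ⟨n, g, gm, g0, hg⟩ := exists_dens hne h𝒳 hconv hsolid hb H
    set z : Ω → ENNReal := fun ω => ENNReal.ofReal (1 / (1 + g ω) ^ 2) with hz
    have zm : Measurable z := by fun_prop
    have zpos : ∀ ω, z ω ≠ 0 := fun ω => by
      have := g0 ω
      exact (ENNReal.ofReal_pos.2 (by positivity)).ne'
    set T := ∫⁻ ω, z ω ∂P with hT
    have T0 : T ≠ 0 := by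
      intro h
      rw [hT, lintegral_eq_zero_iff zm] at h
      obtain ⟨ω, hω⟩ := h.exists
      exact zpos ω hω
    have Ttop : T ≠ ⊤ := by
      refine ne_top_of_le_ne_top ENNReal.one_ne_top (?_ : T ≤ 1)
      have : T ≤ ∫⁻ ω, 1 ∂P := lintegral_mono fun ω => by
        rw [hz, ENNReal.ofReal_le_one]
        have := g0 ω
        rw [div_le_one (by positivity)]
        nlinarith
      simpa using this
    have Tinv : T⁻¹ ≠ ⊤ := ENNReal.inv_ne_top.2 T0
    set Q := P.withDensity (fun ω => T⁻¹ * z ω) with hQ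
    have Qm : Measurable fun ω => T⁻¹ * z ω := zm.const_mul _
    refine ⟨Q, ⟨?_⟩, withDensity_absolutelyContinuous _ _, ?_, ?_⟩
    · rw [hQ, withDensity_apply _ MeasurableSet.univ, Measure.restrict_univ,
        lintegral_const_mul _ zm]
      exact ENNReal.inv_mul_cancel T0 Ttop
    · refine withDensity_absolutelyContinuous' Qm.aemeasurable (ae_of_all _ fun ω => ?_)
      exact mul_ne_zero (ENNReal.inv_ne_zero.2 Ttop) (zpos ω)
    · -- uniform integrability
      have main : ∀ k (N : ℕ), 2 * n k ≤ N →
          ⨆ X ∈ 𝒳, ∫⁻ ω in {ω | (N : ℝ) < X ω}, ENNReal.ofReal (X ω) ∂Q ≤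
            T⁻¹ * ENNReal.ofReal (2 * (1/2) ^ k) := by
        intro k N hN
        refine iSup₂_le fun X hX => ?_
        have Xm := (h𝒳 hX).1
        have ms : MeasurableSet {ω | (N : ℝ) < X ω} := measurableSet_lt measurable_const Xm
        have hN' : 2 * (n k : ℝ) ≤ N := by exact_mod_cast hN
        have n0 : (0:ℝ) ≤ n k := Nat.cast_nonneg _
        have hk := hg k (fun ω => max (X ω - n k) 0) (subset_convexHull ℝ _ ⟨X, hX, rfl⟩)
        rw [← lintegral_indicator ms, hQ, lintegral_withDensity_eq_lintegral_mul _ Qm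
          ((Xm.ennreal_ofReal).indicator ms)]
        calc _ ≤ ∫⁻ ω, T⁻¹ * (ENNReal.ofReal (2 * (1/2) ^ k) *
              ENNReal.ofReal ((1 + 2 ^ k * max (X ω - n k) 0) / (1 + g ω) ^ 2)) ∂P := by
              refine lintegral_mono fun ω => ?_
              simp only [Pi.mul_apply]
              rw [mul_assoc]
              gcongr T⁻¹ * ?_
              have gg := g0 ω
              by_cases hω : (N : ℝ) < X ω
              · rw [Set.indicator_of_mem (show ω ∈ {ω | (N : ℝ) < X ω} from hω), hz,
                  ← ENNReal.ofReal_mul (by positivity), ← ENNReal.ofReal_mul (by positivity)]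
                refine ENNReal.ofReal_le_ofReal ?_
                rw [max_eq_left (by linarith)]
                have p : (1/2 : ℝ) ^ k * 2 ^ k = 1 := by rw [← mul_pow]; norm_num
                have e : 2 * (1/2 : ℝ) ^ k * ((1 + 2 ^ k * (X ω - n k)) / (1 + g ω) ^ 2)
                    = 1 / (1 + g ω) ^ 2 * (2 * (1/2) ^ k + 2 * ((1/2) ^ k * 2 ^ k) * (X ω - n k)) := by
                  ring
                rw [e, p]
                gcongr
                have : (0:ℝ) < (1/2) ^ k := by positivity
                linarith
              · rw [Set.indicator_of_notMem (show ω ∉ {ω | (N : ℝ) < X ω} from hω)]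
                simp
          _ = T⁻¹ * (ENNReal.ofReal (2 * (1/2) ^ k) *
              ∫⁻ ω, ENNReal.ofReal ((1 + 2 ^ k * max (X ω - n k) 0) / (1 + g ω) ^ 2) ∂P) := by
              rw [lintegral_const_mul _ (by fun_prop), lintegral_const_mul _ (by fun_prop)]
          _ ≤ T⁻¹ * (ENNReal.ofReal (2 * (1/2) ^ k) * 1) := by gcongr
          _ = _ := by rw [mul_one]
      have lim0 : Tendsto (fun k : ℕ => T⁻¹ * ENNReal.ofReal (2 * (1/2) ^ k)) atTop (𝓝 0) := by
        have h1 : Tendsto (fun k : ℕ => (2 * (1/2) ^ k : ℝ)) atTop (𝓝 (2 * 0)) :=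
          (tendsto_pow_atTop_nhds_zero_of_lt_one (by norm_num) (by norm_num)).const_mul 2
        have h2 := ENNReal.Tendsto.const_mul (ENNReal.tendsto_ofReal h1) (Or.inr Tinv)
        simpa using h2
      refine ENNReal.tendsto_nhds_zero.2 fun ε hε => ?_
      obtain ⟨k, hk⟩ := (ENNReal.tendsto_nhds_zero.1 lim0 ε hε).exists
      filter_upwards [eventually_ge_atTop (2 * n k)] with N hN
      exact (main k N hN).trans hk
end

section
/- Let 𝒳 ⊆ L⁰₊ and for each n ∈ ℕ define Oₙ^𝒳 := sc{(X − n)₊ : X ∈ 𝒳}. Suppose ⋂ₙ Oₙ^𝒳 = {0}, i.e. the only Y ∈ L⁰₊ belonging to every Oₙ^𝒳 is Y = 0 a.e. Then there exists a measurable function g with 0 < g ≤ 1 P-a.s. such that sup_{Y ∈ Oₙ^𝒳} E_P[Y·g] ≤ 1 holds for every n ∈ ℕ. -/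
open MeasureTheory Filter Topology

/-- `sc S`: the solid hull of the convex hull of `S`. -/
def scSet {Ω : Type*} [MeasurableSpace Ω] (P : Measure Ω) (S : Set (Ω → ℝ)) :
    Set (Ω → ℝ) :=
  {Y | Y ∈ L0pos P ∧ ∃ Z ∈ convexHull ℝ S, ∀ᵐ ω ∂P, Y ω ≤ Z ω}

/-- `Oₙ^𝒳 = sc {(X - n)₊ : X ∈ 𝒳}`. -/
def Oset {Ω : Type*} [MeasurableSpace Ω] (P : Measure Ω) (𝒳 : Set (Ω → ℝ)) (n : ℕ) :
    Set (Ω → ℝ) :=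
  scSet P {f | ∃ X ∈ 𝒳, f = fun ω => max (X ω - n) 0}

open scoped ENNReal NNReal

namespace Aux14

variable {Ω : Type*} [MeasurableSpace Ω]

lemma conv_meas {P : Measure Ω} {𝒳 : Set (Ω → ℝ)} (h𝒳 : 𝒳 ⊆ L0pos P) {Z : Ω → ℝ}
    (hZ : Z ∈ convexHull ℝ 𝒳) : Measurable Z := by
  have : convexHull ℝ 𝒳 ⊆ {Z | Measurable Z} := by
    apply convexHull_min (fun X hX => (h𝒳 hX).1)
    intro X hX Y hY a b _ _ _
    exact (Measurable.const_smul hX a).add (Measurable.const_smul hY b)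
  exact this hZ

lemma conv_shift {𝒳 : Set (Ω → ℝ)} (n : ℕ) {Z : Ω → ℝ}
    (hZ : Z ∈ convexHull ℝ 𝒳) :
    ∃ W ∈ convexHull ℝ {f : Ω → ℝ | ∃ X ∈ 𝒳, f = fun ω => max (X ω - n) 0},
      ∀ ω, Z ω - n ≤ W ω ∧ 0 ≤ W ω := by
  have : convexHull ℝ 𝒳 ⊆ {Z | ∃ W ∈ convexHull ℝ {f : Ω → ℝ | ∃ X ∈ 𝒳, f = fun ω => max (X ω - n) 0},
      ∀ ω, Z ω - n ≤ W ω ∧ 0 ≤ W ω} := by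
    apply convexHull_min
    · intro X hX
      exact ⟨_, subset_convexHull _ _ ⟨X, hX, rfl⟩, fun ω => ⟨le_max_left _ _, le_max_right _ _⟩⟩
    · rintro X ⟨W, hW, h1⟩ Y ⟨V, hV, h2⟩ a b ha hb hab
      refine ⟨a • W + b • V, (convex_convexHull ℝ _) hW hV ha hb hab, fun ω => ?_⟩
      simp only [Pi.add_apply, Pi.smul_apply, smul_eq_mul]
      have e1 := mul_le_mul_of_nonneg_left (h1 ω).1 ha
      have e2 := mul_le_mul_of_nonneg_left (h2 ω).1 hb
      have e3 := mul_nonneg ha (h1 ω).2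
      have e4 := mul_nonneg hb (h2 ω).2
      have e5 : (n : ℝ) = a * n + b * n := by rw [← add_mul, hab, one_mul]
      constructor <;> linarith
  exact this hZ

/-- The solid convex set in `L²`. -/
def D (P : Measure Ω) (𝒳 : Set (Ω → ℝ)) : Set (Lp ℝ 2 P) :=
  {f | (∀ᵐ ω ∂P, 0 ≤ f ω) ∧ ∃ Z ∈ convexHull ℝ 𝒳, ∀ᵐ ω ∂P, f ω ≤ Z ω}

lemma convex_D (P : Measure Ω) (𝒳 : Set (Ω → ℝ)) : Convex ℝ (D P 𝒳) := by
  rintro f ⟨hf, Z, hZ, hfZ⟩ g ⟨hg, V, hV, hgV⟩ a b ha hb hab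
  refine ⟨?_, a • Z + b • V, (convex_convexHull ℝ _) hZ hV ha hb hab, ?_⟩
  · filter_upwards [hf, hg, Lp.coeFn_add (a • f) (b • g), Lp.coeFn_smul a f, Lp.coeFn_smul b g]
      with ω h1 h2 h3 h4 h5
    rw [h3, Pi.add_apply, h4, h5]
    simp only [Pi.smul_apply, smul_eq_mul]
    positivity
  · filter_upwards [hfZ, hgV, Lp.coeFn_add (a • f) (b • g), Lp.coeFn_smul a f, Lp.coeFn_smul b g]
      with ω h1 h2 h3 h4 h5
    rw [h3, Pi.add_apply, h4, h5]
    simp only [Pi.smul_apply, Pi.add_apply, smul_eq_mul]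
    gcongr

lemma not_mem_closure (P : Measure Ω) [IsProbabilityMeasure P]
    (𝒳 : Set (Ω → ℝ)) (h𝒳 : 𝒳 ⊆ L0pos P)
    (hcap : ∀ Y : Ω → ℝ, (∀ n : ℕ, Y ∈ Oset P 𝒳 n) → ∀ᵐ ω ∂P, Y ω = 0)
    {A : Set Ω} (hA : MeasurableSet A) (hPA : P A ≠ 0) :
    ∃ k : ℕ, indicatorConstLp 2 hA (measure_ne_top P A) (k : ℝ) ∉ closure (D P 𝒳) := by
  by_contra! hcon
  obtain ⟨ε, hε, hsum⟩ := ENNReal.exists_pos_sum_of_countable hPA ℕ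
  have key : ∀ n : ℕ, ∃ Z ∈ convexHull ℝ 𝒳, P (A ∩ {ω | Z ω < n + 1}) ≤ ε n := by
    intro n
    have hδ : (0 : ℝ≥0∞) < min 1 (ε n : ℝ≥0∞) := by
      simp [hε n]
    obtain ⟨f, ⟨hf, Z, hZ, hfZ⟩, hd⟩ := EMetric.mem_closure_iff.1 (hcon (n + 2)) _ hδ
    refine ⟨Z, hZ, ?_⟩
    set c := indicatorConstLp 2 hA (measure_ne_top P A) (((n + 2 : ℕ)) : ℝ) with hc
    have hnorm : eLpNorm (c - f : Lp ℝ 2 P) 2 P < min 1 (ε n : ℝ≥0∞) := by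
      rwa [← Lp.enorm_def, ← edist_eq_enorm_sub]
    have hm := mul_meas_ge_le_pow_eLpNorm' P (p := 2) two_ne_zero ENNReal.ofNat_ne_top
      (Lp.aestronglyMeasurable (c - f)) 1
    have hle : P (A ∩ {ω | Z ω < n + 1}) ≤ P {x | 1 ≤ ‖(c - f : Lp ℝ 2 P) x‖ₑ} := by
      apply measure_mono_ae
      filter_upwards [hfZ, Lp.coeFn_sub c f, indicatorConstLp_coeFn (p := 2) (hs := hA)
        (hμs := measure_ne_top P A) (c := (((n + 2 : ℕ)) : ℝ))] with ω h1 h2 h3 hω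
      obtain ⟨h4, h5⟩ := hω
      change 1 ≤ ‖(c - f : Lp ℝ 2 P) ω‖ₑ
      rw [h2, Pi.sub_apply, hc, h3, Set.indicator_of_mem h4]
      rw [← ofReal_norm, ENNReal.one_le_ofReal]
      have : Z ω < n + 1 := h5
      refine le_trans ?_ (le_abs_self _)
      push_cast
      linarith
    refine hle.trans ?_
    simp only [ENNReal.toReal_ofNat, ENNReal.one_rpow, one_mul] at hm
    refine hm.trans ?_
    set t := eLpNorm (c - f : Lp ℝ 2 P) 2 P
    have t1 : t ≤ 1 := (hnorm.trans_le (min_le_left _ _)).le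
    have t2 : t ≤ ε n := (hnorm.trans_le (min_le_right _ _)).le
    rw [ENNReal.rpow_two, sq]
    calc t * t ≤ 1 * ε n := by gcongr
      _ = ε n := one_mul _
  choose Z hZ hPZ using key
  set B : Set Ω := A \ ⋃ n, (A ∩ {ω | Z n ω < n + 1}) with hB
  have hBm : MeasurableSet B := hA.diff (MeasurableSet.iUnion fun n =>
    hA.inter (measurableSet_lt (conv_meas h𝒳 (hZ n)) measurable_const))
  have hPB : P B ≠ 0 := by
    intro h0
    have h1 : P A ≤ P (⋃ n, (A ∩ {ω | Z n ω < n + 1})) := by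
      have := le_measure_sdiff (μ := P) (s₁ := A) (s₂ := ⋃ n, (A ∩ {ω | Z n ω < n + 1}))
      rw [← hB, h0] at this
      exact tsub_eq_zero_iff_le.1 (le_antisymm this bot_le)
    have h2 := (h1.trans (measure_iUnion_le _)).trans (ENNReal.tsum_le_tsum hPZ)
    exact absurd hsum (not_lt.2 h2)
  have := hcap (B.indicator 1) (fun n => by
    refine ⟨⟨measurable_one.indicator hBm, ae_of_all _ fun ω =>
      Set.indicator_nonneg (fun _ _ => zero_le_one) _⟩, ?_⟩
    obtain ⟨W, hW, hWZ⟩ := conv_shift n (hZ n)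
    refine ⟨W, hW, ae_of_all _ fun ω => ?_⟩
    by_cases hω : ω ∈ B
    · rw [Set.indicator_of_mem hω]
      have h3 : ¬ Z n ω < n + 1 := fun h => hω.2 (Set.mem_iUnion.2 ⟨n, hω.1, h⟩)
      have := (hWZ ω).1
      simp only [Pi.one_apply]
      linarith
    · rw [Set.indicator_of_notMem hω]
      exact (hWZ ω).2)
  apply hPB
  rw [measure_eq_zero_iff_ae_notMem]
  filter_upwards [this] with ω h hω
  simp [Set.indicator_of_mem hω] at h

/-- Admissible densities. -/
def Good (P : Measure Ω) (𝒳 : Set (Ω → ℝ)) (g : Ω → ℝ≥0∞) : Prop :=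
  Measurable g ∧ (∀ ω, g ω ≤ 1) ∧ ∀ X ∈ 𝒳, ∫⁻ ω, ENNReal.ofReal (X ω) * g ω ∂P ≤ 1

lemma exists_good (P : Measure Ω) [IsProbabilityMeasure P]
    (𝒳 : Set (Ω → ℝ)) (h𝒳 : 𝒳 ⊆ L0pos P)
    (hcap : ∀ Y : Ω → ℝ, (∀ n : ℕ, Y ∈ Oset P 𝒳 n) → ∀ᵐ ω ∂P, Y ω = 0)
    {A : Set Ω} (hA : MeasurableSet A) (hPA : P A ≠ 0) :
    ∃ g, Good P 𝒳 g ∧ P (A ∩ {ω | 0 < g ω}) ≠ 0 := by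
  rcases 𝒳.eq_empty_or_nonempty with rfl | ⟨X₀, hX₀⟩
  · exact ⟨1, ⟨measurable_one, fun _ => le_rfl, by simp⟩, by simpa using hPA⟩
  obtain ⟨k, hk⟩ := not_mem_closure P 𝒳 h𝒳 hcap hA hPA
  obtain ⟨φ, u, hφ, hu⟩ := geometric_hahn_banach_closed_point (convex_D P 𝒳).closure
    isClosed_closure hk
  set g : Lp ℝ 2 P := (InnerProductSpace.toDual ℝ (Lp ℝ 2 P)).symm φ with hg
  have hin : ∀ f : Lp ℝ 2 P, φ f = ∫ ω, f ω * g ω ∂P := by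
    intro f
    rw [← InnerProductSpace.toDual_symm_apply, ← hg, L2.inner_def]
    simp
  have hgm : Measurable g := (Lp.stronglyMeasurable g).measurable
  have hu0 : 0 < u := by
    have := hφ 0 (subset_closure ⟨?_, X₀, subset_convexHull _ _ hX₀, ?_⟩)
    · simpa using this
    · filter_upwards [Lp.coeFn_zero ℝ 2 P] with ω h
      simp [h]
    · filter_upwards [Lp.coeFn_zero ℝ 2 P, (h𝒳 hX₀).2] with ω h h'
      simpa [h] using h'
  refine ⟨fun ω => min 1 (ENNReal.ofReal (g ω / u)), ⟨by fun_prop, fun ω => min_le_left _ _, ?_⟩, ?_⟩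
  · intro X hX
    obtain ⟨hXm, hX0⟩ := h𝒳 hX
    have hb : ∀ m : ℕ, ∫⁻ ω, ENNReal.ofReal (min (X ω) m) * ENNReal.ofReal (g ω / u) ∂P ≤ 1 := by
      intro m
      set F : Ω → ℝ := {ω | 0 < g ω}.indicator (fun ω => max (min (X ω) m) 0) with hF
      have hFm : Measurable F :=
        ((hXm.min measurable_const).max measurable_const).indicator
          (measurableSet_lt measurable_const hgm)
      have hF0 : ∀ ω, 0 ≤ F ω := fun ω => Set.indicator_nonneg (fun _ _ => le_max_right _ _) _
      have hFb : ∀ ω, F ω ≤ m := by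
        intro ω
        refine Set.indicator_le' (g := fun _ => (m : ℝ)) ?_ ?_ ω
        · intro x _
          exact max_le (min_le_right _ _) (Nat.cast_nonneg m)
        · intro x _
          exact Nat.cast_nonneg m
      have hFL : MemLp F 2 P := MemLp.of_bound hFm.aestronglyMeasurable m
        (ae_of_all _ fun ω => by rw [Real.norm_of_nonneg (hF0 ω)]; exact hFb ω)
      have hFD : hFL.toLp F ∈ D P 𝒳 := by
        refine ⟨?_, X, subset_convexHull _ _ hX, ?_⟩
        · filter_upwards [hFL.coeFn_toLp] with ω h
          rw [h]; exact hF0 ω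
        · filter_upwards [hFL.coeFn_toLp, hX0] with ω h h0
          rw [h]
          exact Set.indicator_apply_le' (fun _ => max_le (min_le_left _ _) h0) (fun _ => h0)
      have h1 := hφ _ (subset_closure hFD)
      rw [hin] at h1
      have h2 : ∫ ω, hFL.toLp F ω * g ω ∂P = ∫ ω, F ω * g ω ∂P := by
        apply integral_congr_ae
        filter_upwards [hFL.coeFn_toLp] with ω h
        rw [h]
      rw [h2] at h1
      have hint : Integrable (fun ω => F ω * g ω) P := hFL.integrable_mul (Lp.memLp g)
      have hpos : ∀ ω, 0 ≤ F ω * g ω := by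
        intro ω
        by_cases h : 0 < g ω
        · exact mul_nonneg (hF0 ω) h.le
        · simp [hF, h]
      have h3 := ofReal_integral_eq_lintegral_ofReal (hint.div_const u)
        (ae_of_all _ fun ω => div_nonneg (hpos ω) hu0.le)
      have h4 : ∫⁻ ω, ENNReal.ofReal (min (X ω) m) * ENNReal.ofReal (g ω / u) ∂P
          ≤ ∫⁻ ω, ENNReal.ofReal (F ω * g ω / u) ∂P := by
        apply lintegral_mono
        intro ω
        dsimp only
        by_cases h : 0 < g ω
        · rw [mul_div_assoc, ENNReal.ofReal_mul (hF0 ω)]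
          gcongr
          rw [hF, Set.indicator_of_mem (show ω ∈ {ω | 0 < g ω} from h)]
          exact le_max_left _ _
        · rw [ENNReal.ofReal_of_nonpos (p := g ω / u)
            (div_nonpos_of_nonpos_of_nonneg (not_lt.1 h) hu0.le)]
          simp
      refine h4.trans ?_
      rw [← h3, integral_div]
      exact ENNReal.ofReal_le_one.2 ((div_le_one hu0).2 h1.le)
    have hlim : ∫⁻ ω, ENNReal.ofReal (X ω) * ENNReal.ofReal (g ω / u) ∂P ≤ 1 := by
      have hmono := lintegral_iSup (μ := P)
        (f := fun (m : ℕ) ω => ENNReal.ofReal (min (X ω) m) * ENNReal.ofReal (g ω / u))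
        (by intro m; fun_prop)
        (by
          intro a b hab ω
          dsimp only
          gcongr)
      refine le_trans ?_ (hmono.le.trans (iSup_le hb))
      apply lintegral_mono
      intro ω
      dsimp only
      obtain ⟨m, hm⟩ := exists_nat_ge (X ω)
      refine le_trans ?_ (le_iSup _ m)
      rw [min_eq_left hm]
    refine le_trans (lintegral_mono fun ω => ?_) hlim
    dsimp only
    gcongr
    exact min_le_right _ _
  · intro h0
    have hneg : ∀ᵐ ω ∂P, ω ∈ A → g ω ≤ 0 := by
      rw [measure_eq_zero_iff_ae_notMem] at h0
      filter_upwards [h0] with ω h hω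
      by_contra hc
      push Not at hc
      exact h ⟨hω, by
        show 0 < min 1 (ENNReal.ofReal (g ω / u))
        exact lt_min one_pos (ENNReal.ofReal_pos.2 (div_pos hc hu0))⟩
    rw [hin] at hu
    have : ∫ ω, indicatorConstLp 2 hA (measure_ne_top P A) (k : ℝ) ω * g ω ∂P ≤ 0 := by
      apply integral_nonpos_of_ae
      filter_upwards [hneg, indicatorConstLp_coeFn (p := 2) (hs := hA)
        (hμs := measure_ne_top P A) (c := (k : ℝ))] with ω h h'
      rw [h']
      by_cases hω : ω ∈ A
      · rw [Set.indicator_of_mem hω]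
        exact mul_nonpos_of_nonneg_of_nonpos (Nat.cast_nonneg k) (h hω)
      · simp [hω]
    linarith

lemma good_tsum {P : Measure Ω} {𝒳 : Set (Ω → ℝ)} (h𝒳 : 𝒳 ⊆ L0pos P)
    {g : ℕ → Ω → ℝ≥0∞} (hg : ∀ n, Good P 𝒳 (g n)) :
    Good P 𝒳 (fun ω => ∑' n, 2⁻¹ ^ (n + 1) * g n ω) := by
  have hone : ∑' n : ℕ, (2⁻¹ : ℝ≥0∞) ^ (n + 1) = 1 := by
    rw [ENNReal.tsum_geometric_add_one, ENNReal.one_sub_inv_two, inv_inv]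
    exact ENNReal.inv_mul_cancel two_ne_zero ENNReal.ofNat_ne_top
  refine ⟨Measurable.tsum fun n => (hg n).1.const_mul _, fun ω => ?_, fun X hX => ?_⟩
  · rw [← hone]
    exact ENNReal.tsum_le_tsum fun n => mul_le_of_le_one_right' ((hg n).2.1 ω)
  · have hXm := (h𝒳 hX).1
    simp_rw [← ENNReal.tsum_mul_left]
    rw [lintegral_tsum fun n => by
      have := (hg n).1
      fun_prop]
    rw [← hone]
    refine ENNReal.tsum_le_tsum fun n => ?_
    simp_rw [mul_left_comm (ENNReal.ofReal _) ((2⁻¹ : ℝ≥0∞) ^ (n + 1)) (g n _)]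
    have := (hg n).1
    rw [lintegral_const_mul _ (by fun_prop)]
    exact mul_le_of_le_one_right' ((hg n).2.2 X hX)

lemma exists_good_pos (P : Measure Ω) [IsProbabilityMeasure P]
    (𝒳 : Set (Ω → ℝ)) (h𝒳 : 𝒳 ⊆ L0pos P)
    (hcap : ∀ Y : Ω → ℝ, (∀ n : ℕ, Y ∈ Oset P 𝒳 n) → ∀ᵐ ω ∂P, Y ω = 0) :
    ∃ g, Good P 𝒳 g ∧ ∀ᵐ ω ∂P, 0 < g ω := by
  set S : Set ℝ≥0∞ := Set.image (fun g : Ω → ℝ≥0∞ => P {ω | 0 < g ω}) {g | Good P 𝒳 g} with hS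
  have hSne : S.Nonempty := ⟨_, 0, ⟨measurable_zero, by simp, by simp⟩, rfl⟩
  obtain ⟨v, -, hvt, hvS⟩ := exists_seq_tendsto_sSup hSne (OrderTop.bddAbove S)
  choose g hg hgv using hvS
  have hsub : ∀ (f : ℕ → Ω → ℝ≥0∞) (n : ℕ), {ω | 0 < f n ω} ⊆
      {ω | 0 < ∑' n, 2⁻¹ ^ (n + 1) * f n ω} := by
    intro f n ω hω
    have h1 : 0 < (2⁻¹ : ℝ≥0∞) ^ (n + 1) * f n ω :=
      ENNReal.mul_pos (by simp) (ne_of_gt hω)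
    exact h1.trans_le (ENNReal.le_tsum n)
  set G : Ω → ℝ≥0∞ := fun ω => ∑' n, 2⁻¹ ^ (n + 1) * g n ω with hG
  have hGg : Good P 𝒳 G := good_tsum h𝒳 hg
  have hGs : sSup S ≤ P {ω | 0 < G ω} := by
    refine le_of_tendsto' hvt fun n => ?_
    rw [← hgv n]
    exact measure_mono (hsub g n)
  refine ⟨G, hGg, ?_⟩
  have hGm : MeasurableSet {ω | 0 < G ω} := measurableSet_lt measurable_const hGg.1
  by_contra hc
  have hPA : P {ω | 0 < G ω}ᶜ ≠ 0 := hc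
  obtain ⟨h, hh, hhp⟩ := exists_good P 𝒳 h𝒳 hcap hGm.compl hPA
  set f : ℕ → Ω → ℝ≥0∞ := fun n => if n = 0 then G else h with hf
  have hfg : ∀ n, Good P 𝒳 (f n) := by
    intro n
    by_cases hn : n = 0 <;> simp [hf, hn, hGg, hh]
  have hF := good_tsum h𝒳 hfg
  have h0 := hsub f 0
  have h1 := hsub f 1
  simp only [hf, if_true, one_ne_zero, if_false] at h0 h1
  have hle : P {ω | 0 < ∑' n, 2⁻¹ ^ (n + 1) * f n ω} ≤ sSup S := le_sSup ⟨_, hF, rfl⟩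
  have hun : P {ω | 0 < G ω} + P ({ω | 0 < G ω}ᶜ ∩ {ω | 0 < h ω}) ≤ P {ω | 0 < G ω} + 0 := by
    rw [← measure_union' (disjoint_compl_right.mono_right Set.inter_subset_left) hGm, add_zero]
    exact (measure_mono (Set.union_subset h0 (Set.inter_subset_right.trans h1))).trans
      (hle.trans hGs)
  exact hhp (le_antisymm ((ENNReal.add_le_add_iff_left (measure_ne_top P _)).1 hun) bot_le)

end Aux14

/-- If `⋂ₙ Oₙ^𝒳 = {0}`, there is a measurable `g` with `0 < g ≤ 1` a.s. such that
`sup_{Y ∈ Oₙ^𝒳} E_P[Y g] ≤ 1` for all `n`. -/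
theorem stmt_14 {Ω : Type*} [MeasurableSpace Ω] (P : Measure Ω) [IsProbabilityMeasure P]
    (𝒳 : Set (Ω → ℝ)) (h𝒳 : 𝒳 ⊆ L0pos P)
    (hcap : ∀ Y : Ω → ℝ, (∀ n : ℕ, Y ∈ Oset P 𝒳 n) → ∀ᵐ ω ∂P, Y ω = 0) :
    ∃ g : Ω → ℝ, Measurable g ∧ (∀ᵐ ω ∂P, 0 < g ω ∧ g ω ≤ 1) ∧
      ∀ n : ℕ, (⨆ Y ∈ Oset P 𝒳 n, ∫⁻ ω, ENNReal.ofReal (Y ω * g ω) ∂P) ≤ 1 := by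
  obtain ⟨g, ⟨hgm, hg1, hgX⟩, hg0⟩ := Aux14.exists_good_pos P 𝒳 h𝒳 hcap
  have hgt : ∀ ω, g ω ≠ ⊤ := fun ω => ne_top_of_le_ne_top ENNReal.one_ne_top (hg1 ω)
  refine ⟨fun ω => (g ω).toReal, hgm.ennreal_toReal, ?_, ?_⟩
  · filter_upwards [hg0] with ω h
    exact ⟨ENNReal.toReal_pos h.ne' (hgt ω), ENNReal.toReal_le_of_le_ofReal zero_le_one
      (by simpa using hg1 ω)⟩
  · intro n
    refine iSup₂_le ?_
    rintro Y ⟨hY, Z, hZ, hYZ⟩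
    have hsub : convexHull ℝ {f | ∃ X ∈ 𝒳, f = fun ω => max (X ω - n) 0} ⊆
        {Z : Ω → ℝ | Measurable Z ∧ ∫⁻ ω, ENNReal.ofReal (Z ω) * g ω ∂P ≤ 1} := by
      apply convexHull_min
      · rintro _ ⟨X, hX, rfl⟩
        have hXm := (h𝒳 hX).1
        refine ⟨by fun_prop, le_trans (lintegral_mono_ae ?_) (hgX X hX)⟩
        filter_upwards [(h𝒳 hX).2] with ω h
        gcongr
        exact max_le (sub_le_self _ (Nat.cast_nonneg n)) h
      · rintro U ⟨hU, hU1⟩ V ⟨hV, hV1⟩ a b ha hb hab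
        refine ⟨(hU.const_smul a).add (hV.const_smul b), ?_⟩
        calc ∫⁻ ω, ENNReal.ofReal ((a • U + b • V) ω) * g ω ∂P
            ≤ ∫⁻ ω, (ENNReal.ofReal a * (ENNReal.ofReal (U ω) * g ω)
                + ENNReal.ofReal b * (ENNReal.ofReal (V ω) * g ω)) ∂P := by
              apply lintegral_mono
              intro ω
              simp only [Pi.add_apply, Pi.smul_apply, smul_eq_mul]
              rw [← mul_assoc, ← mul_assoc, ← add_mul, ← ENNReal.ofReal_mul ha,
                ← ENNReal.ofReal_mul hb]
              gcongr
              exact ENNReal.ofReal_add_le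
          _ = ENNReal.ofReal a * ∫⁻ ω, ENNReal.ofReal (U ω) * g ω ∂P
                + ENNReal.ofReal b * ∫⁻ ω, ENNReal.ofReal (V ω) * g ω ∂P := by
              rw [lintegral_add_left (by fun_prop), lintegral_const_mul _ (by fun_prop),
                lintegral_const_mul _ (by fun_prop)]
          _ ≤ ENNReal.ofReal a * 1 + ENNReal.ofReal b * 1 := by gcongr
          _ = 1 := by rw [mul_one, mul_one, ← ENNReal.ofReal_add ha hb, hab, ENNReal.ofReal_one]
    refine le_trans (lintegral_mono_ae ?_) (hsub hZ).2
    filter_upwards [hYZ, hY.2] with ω h h0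
    rw [ENNReal.ofReal_mul h0, ENNReal.ofReal_toReal (hgt ω)]
    gcongr
end
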